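/- Let u : A → B be a morphism of noetherian rings, M a finitely generated A-module, N a finitely generated B-module which is flat as an A-module, and n a natural number. Consider M ⊗_A N as a B-module. If M satisfies Serre's condition (S_n) and for every P ∈ Supp(M) the fiber module N_P/PN_P satisfies the condition (C_n) as a module over B_P/PB_P, then M ⊗_A N satisfies the condition (C_n) as a B-module. -/

import Mathlib

noncomputable section

open TensorProduct

universe u v w





/-- The depth of the ideal `I` on the module `M`: the supremum of lengths of
`M`-regular sequences with entries in `I`. -/
noncomputable def idealDepth (A : Type u) [CommRing A] (I : Ideal A)
    (M : Type v) [AddCommGroup M] [Module A M] : ℕ∞ :=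
  sSup {n : ℕ∞ | ∃ rs : List A, (rs.length : ℕ∞) = n ∧ (∀ r ∈ rs, r ∈ I) ∧
    RingTheory.Sequence.IsRegular M rs}

/-- The depth of a module over a local ring. -/
noncomputable def localDepth (A : Type u) [CommRing A] [IsLocalRing A]
    (M : Type v) [AddCommGroup M] [Module A M] : ℕ∞ :=
  idealDepth A (IsLocalRing.maximalIdeal A) M

/-- The (Krull) dimension of a module, i.e. the Krull dimension of its support. -/
noncomputable def supportDim (A : Type u) [CommRing A]
    (M : Type v) [AddCommGroup M] [Module A M] : WithBot ℕ∞ :=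
  Order.krullDim (Module.support A M)

/-- `depth (M_P)` : the depth of the localization of `M` at a prime `P`,
over the local ring `A_P`. -/
noncomputable def depthAt (A : Type u) [CommRing A]
    (M : Type v) [AddCommGroup M] [Module A M] (P : PrimeSpectrum A) : ℕ∞ :=
  localDepth (Localization.AtPrime P.asIdeal) (LocalizedModule P.asIdeal.primeCompl M)

/-- `ht_M(P) = dim (M_P)` : the height of a prime `P` in the support of `M`,
i.e. the dimension of the localized module `M_P` over `A_P`. -/
noncomputable def heightAt (A : Type u) [CommRing A]
    (M : Type v) [AddCommGroup M] [Module A M] (P : PrimeSpectrum A) : WithBot ℕ∞ :=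
  supportDim (Localization.AtPrime P.asIdeal) (LocalizedModule P.asIdeal.primeCompl M)

/-- Serre's condition `(S_n)` for a module: for every `P` in the support,
`depth (M_P) ≥ min (n, ht_M(P))`. -/
def SerreCondS (A : Type u) [CommRing A] (n : ℕ)
    (M : Type v) [AddCommGroup M] [Module A M] : Prop :=
  ∀ P ∈ Module.support A M,
    min (n : WithBot ℕ∞) (heightAt A M P) ≤ (depthAt A M P : WithBot ℕ∞)

/-- The condition `(C_n)` for a module: for every `P` in the support,
`depth (M_P) ≥ min (n, ht_M(P)) - 1`, equivalently
`min (n, ht_M(P)) ≤ depth (M_P) + 1`. -/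
def CondC (A : Type u) [CommRing A] (n : ℕ)
    (M : Type v) [AddCommGroup M] [Module A M] : Prop :=
  ∀ P ∈ Module.support A M,
    min (n : WithBot ℕ∞) (heightAt A M P) ≤ (depthAt A M P : WithBot ℕ∞) + 1

/-- A module `M` is almost Cohen-Macaulay if `depth(P, M) = depth (M_P)` for every
`P` in the support of `M` (Kang's definition). -/
def IsAlmostCMModule (A : Type u) [CommRing A]
    (M : Type v) [AddCommGroup M] [Module A M] : Prop :=
  ∀ P ∈ Module.support A M, idealDepth A P.asIdeal M = depthAt A M P

/-- A module `M` is Cohen-Macaulay if `depth (M_P) = dim (M_P)` for every `P` in its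
support. -/
def IsCMModule (A : Type u) [CommRing A]
    (M : Type v) [AddCommGroup M] [Module A M] : Prop :=
  ∀ P ∈ Module.support A M, (depthAt A M P : WithBot ℕ∞) = heightAt A M P

/-- A ring is almost Cohen-Macaulay if it is an almost Cohen-Macaulay module over
itself. -/
abbrev IsAlmostCMRing (A : Type u) [CommRing A] : Prop := IsAlmostCMModule A A

/-- A ring is Cohen-Macaulay if it is a Cohen-Macaulay module over itself, i.e. all its
localizations at primes have depth equal to dimension. -/
abbrev IsCMRing (A : Type u) [CommRing A] : Prop := IsCMModule A A

/-- A ring satisfies `(C_n)` if it does so as a module over itself. -/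
abbrev RingCondC (A : Type u) [CommRing A] (n : ℕ) : Prop := CondC A n A

/-- A ring satisfies `(S_n)` if it does so as a module over itself. -/
abbrev RingSerreCondS (A : Type u) [CommRing A] (n : ℕ) : Prop := SerreCondS A n A






variable (A : Type u) [CommRing A] (B : Type u) [CommRing B] [Algebra A B]

/-- The image in `B` of the complement of a prime `P` of `A`, as a submonoid of `B`. -/
noncomputable def fiberSubmonoid (P : PrimeSpectrum A) : Submonoid B :=
  Submonoid.map (algebraMap A B) P.asIdeal.primeCompl

/-- `PB_P` : the extension of the prime `P` of `A` to the localization `B_P` of `B`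
at (the image of) the complement of `P`. -/
noncomputable def fiberIdeal (P : PrimeSpectrum A) :
    Ideal (Localization (fiberSubmonoid A B P)) :=
  Ideal.map ((algebraMap B (Localization (fiberSubmonoid A B P))).comp (algebraMap A B))
    P.asIdeal

/-- The fiber ring `B_P / P B_P` of `A → B` at a prime `P` of `A`. -/
noncomputable def fiberRing (P : PrimeSpectrum A) : Type u :=
  Localization (fiberSubmonoid A B P) ⧸ fiberIdeal A B P

noncomputable instance (P : PrimeSpectrum A) : CommRing (fiberRing A B P) :=
  inferInstanceAs (CommRing (Localization (fiberSubmonoid A B P) ⧸ fiberIdeal A B P))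

/-- The fiber module `N_P / P N_P` of a `B`-module `N` at a prime `P` of `A`. -/
noncomputable def fiberModule (P : PrimeSpectrum A)
    (N : Type u) [AddCommGroup N] [Module B N] : Type u :=
  LocalizedModule (fiberSubmonoid A B P) N ⧸
    (fiberIdeal A B P •
      (⊤ : Submodule (Localization (fiberSubmonoid A B P))
        (LocalizedModule (fiberSubmonoid A B P) N)))

noncomputable instance (P : PrimeSpectrum A) (N : Type u) [AddCommGroup N] [Module B N] :
    AddCommGroup (fiberModule A B P N) :=
  inferInstanceAs (AddCommGroup (LocalizedModule (fiberSubmonoid A B P) N ⧸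
    (fiberIdeal A B P •
      (⊤ : Submodule (Localization (fiberSubmonoid A B P))
        (LocalizedModule (fiberSubmonoid A B P) N)))))

/-- `N_P / P N_P` is a module over the fiber ring `B_P / P B_P`. -/
noncomputable instance (P : PrimeSpectrum A) (N : Type u) [AddCommGroup N] [Module B N] :
    Module (fiberRing A B P) (fiberModule A B P N) :=
  inferInstanceAs (Module (Localization (fiberSubmonoid A B P) ⧸ fiberIdeal A B P)
    (LocalizedModule (fiberSubmonoid A B P) N ⧸
      (fiberIdeal A B P •
        (⊤ : Submodule (Localization (fiberSubmonoid A B P))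
          (LocalizedModule (fiberSubmonoid A B P) N)))))








/-- The canonical `B`-module structure on `M ⊗[A] N`, where `N` is a `B`-module,
given by `b • (m ⊗ n) = m ⊗ (b • n)`. -/
noncomputable instance tensorRightModule (A : Type u) [CommRing A] (B : Type u) [CommRing B]
    [Algebra A B] (M : Type u) [AddCommGroup M] [Module A M]
    (N : Type u) [AddCommGroup N] [Module A N] [Module B N] [IsScalarTower A B N] :
    Module B (M ⊗[A] N) where
  smul b x := (TensorProduct.comm A M N).symm (b • TensorProduct.comm A M N x)
  one_smul x := by
    show (TensorProduct.comm A M N).symm ((1 : B) • TensorProduct.comm A M N x) = x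
    simp
  mul_smul a b x := by
    show (TensorProduct.comm A M N).symm ((a * b) • TensorProduct.comm A M N x) =
      (TensorProduct.comm A M N).symm (a • TensorProduct.comm A M N
        ((TensorProduct.comm A M N).symm (b • TensorProduct.comm A M N x)))
    simp [mul_smul]
  smul_zero b := by
    show (TensorProduct.comm A M N).symm (b • TensorProduct.comm A M N 0) = 0
    simp
  smul_add b x y := by
    show (TensorProduct.comm A M N).symm (b • TensorProduct.comm A M N (x + y)) =
      (TensorProduct.comm A M N).symm (b • TensorProduct.comm A M N x) +
      (TensorProduct.comm A M N).symm (b • TensorProduct.comm A M N y)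
    simp
  add_smul a b x := by
    show (TensorProduct.comm A M N).symm ((a + b) • TensorProduct.comm A M N x) =
      (TensorProduct.comm A M N).symm (a • TensorProduct.comm A M N x) +
      (TensorProduct.comm A M N).symm (b • TensorProduct.comm A M N x)
    simp [add_smul]
  zero_smul x := by
    show (TensorProduct.comm A M N).symm ((0 : B) • TensorProduct.comm A M N x) = 0
    simp



attribute [local instance] TensorProduct.leftModule TensorProduct.instModule

open RingTheory.Sequence IsLocalRing Pointwise

section TensorQuotient

variable {R S : Type*} [CommRing R] [CommRing S] [Algebra R S]
  (N : Type*) [AddCommGroup N] [Module R N] [Module S N] [IsScalarTower R S N]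
  (M : Type*) [AddCommGroup M] [Module R M]

variable {N} in
lemma smul_top_eq_ker_rTensor {N' : Type*} [AddCommGroup N'] [Module R N'] [Module S N']
    [IsScalarTower R S N'] (y : S) (π : N →ₗ[S] N') (hπ : Function.Surjective π)
    (hker : LinearMap.ker π = y • ⊤) :
    y • (⊤ : Submodule S (N ⊗[R] M)) = LinearMap.ker (AlgebraTensorModule.rTensor R M π) := by
  have hex : Function.Exact ((LinearMap.lsmul S N y).restrictScalars R)
      (π.restrictScalars R) := by
    intro n
    rw [LinearMap.coe_restrictScalars, ← LinearMap.mem_ker, hker]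
    simp [Submodule.mem_smul_pointwise_iff_exists]
  have hs (w : N ⊗[R] M) :
      LinearMap.rTensor M ((LinearMap.lsmul S N y).restrictScalars R) w = y • w := by
    induction w with
    | zero => simp
    | add a b ha hb => simp [ha, hb]
    | tmul a b => simp [TensorProduct.smul_tmul']
  ext z
  rw [LinearMap.mem_ker]
  refine Iff.trans ?_ (rTensor_exact M hex hπ z).symm
  simp [Submodule.mem_smul_pointwise_iff_exists, hs]

variable {N} in
lemma algebraTensorModule_rTensor_surjective {N' : Type*} [AddCommGroup N'] [Module R N']
    [Module S N'] [IsScalarTower R S N'] (π : N →ₗ[S] N') (hπ : Function.Surjective π) :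
    Function.Surjective (AlgebraTensorModule.rTensor R M π) :=
  LinearMap.rTensor_surjective M (g := π.restrictScalars R) hπ

/-- Reducing `N ⊗ M` modulo `y` amounts to reducing the left factor modulo `y`. -/
def quotSMulTopTensorEquiv (y : S) :
    QuotSMulTop y (N ⊗[R] M) ≃ₗ[S] QuotSMulTop y N ⊗[R] M :=
  (Submodule.quotEquivOfEq _ _ (smul_top_eq_ker_rTensor M y (y • (⊤ : Submodule S N)).mkQ
    (Submodule.mkQ_surjective _) (Submodule.ker_mkQ _))).trans
  (LinearMap.quotKerEquivOfSurjective _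
    (algebraTensorModule_rTensor_surjective M (y • (⊤ : Submodule S N)).mkQ
      (Submodule.mkQ_surjective _)))

@[simp]
lemma quotSMulTopTensorEquiv_mk (y : S) (z : N ⊗[R] M) :
    quotSMulTopTensorEquiv N M y (Submodule.Quotient.mk z) =
      AlgebraTensorModule.rTensor R M (y • (⊤ : Submodule S N)).mkQ z := rfl

variable {M} in
lemma smul_top_eq_ker_lTensor {M' : Type*} [AddCommGroup M'] [Module R M'] (x : R)
    (π : M →ₗ[R] M') (hπ : Function.Surjective π) (hker : LinearMap.ker π = x • ⊤) :
    algebraMap R S x • (⊤ : Submodule S (N ⊗[R] M)) =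
      LinearMap.ker (AlgebraTensorModule.lTensor S N π) := by
  have hex : Function.Exact (LinearMap.lsmul R M x) π := by
    intro n
    rw [← LinearMap.mem_ker, hker]
    simp [Submodule.mem_smul_pointwise_iff_exists]
  have hs (w : N ⊗[R] M) :
      LinearMap.lTensor N (LinearMap.lsmul R M x) w = algebraMap R S x • w := by
    induction w with
    | zero => simp
    | add a b ha hb => simp [ha, hb]
    | tmul a b => simp [TensorProduct.smul_tmul']
  ext z
  rw [LinearMap.mem_ker]
  refine Iff.trans ?_ (lTensor_exact N hex hπ z).symm
  simp [Submodule.mem_smul_pointwise_iff_exists, hs]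

/-- Reducing `N ⊗ M` modulo an element of the base ring amounts to reducing the right factor. -/
def quotSMulTopAlgebraMapTensorEquiv (x : R) :
    QuotSMulTop (algebraMap R S x) (N ⊗[R] M) ≃ₗ[S] N ⊗[R] QuotSMulTop x M :=
  (Submodule.quotEquivOfEq _ _ (smul_top_eq_ker_lTensor N x (x • (⊤ : Submodule R M)).mkQ
    (Submodule.mkQ_surjective _) (Submodule.ker_mkQ _))).trans
  (LinearMap.quotKerEquivOfSurjective _
    (LinearMap.lTensor_surjective N (g := (x • (⊤ : Submodule R M)).mkQ)
      (Submodule.mkQ_surjective _)))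

/-- The `S`-linear form of `N / IN ≃ N ⊗ R/I`. -/
def quotientMapSMulTopEquivTensor (I : Ideal R) :
    (N ⧸ (I.map (algebraMap R S) • (⊤ : Submodule S N))) ≃ₗ[S] N ⊗[R] (R ⧸ I) :=
  let f : N →ₗ[S] N ⊗[R] (R ⧸ I) :=
    (AlgebraTensorModule.mk R S N (R ⧸ I)).flip 1
  have hf : Function.Surjective f := fun z ↦ by
    induction z with
    | zero => exact ⟨0, map_zero f⟩
    | add a b ha hb =>
      obtain ⟨⟨a, rfl⟩, ⟨b, rfl⟩⟩ := And.intro ha hb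
      exact ⟨a + b, map_add f a b⟩
    | tmul n r =>
      obtain ⟨r, rfl⟩ := Ideal.Quotient.mk_surjective r
      refine ⟨r • n, ?_⟩
      change (r • n) ⊗ₜ[R] (1 : R ⧸ I) = _
      rw [TensorProduct.smul_tmul, Algebra.smul_def, mul_one]
      rfl
  have hker : I.map (algebraMap R S) • (⊤ : Submodule S N) = LinearMap.ker f := by
    ext n
    rw [LinearMap.mem_ker, ← Submodule.restrictScalars_mem R, Ideal.smul_restrictScalars,
      Submodule.restrictScalars_top, ← Submodule.Quotient.mk_eq_zero,
      ← (TensorProduct.tensorQuotEquivQuotSMul N I).map_eq_zero_iff]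
    change _ ↔ TensorProduct.tensorQuotEquivQuotSMul N I
      (n ⊗ₜ[R] Ideal.Quotient.mk I 1) = 0
    rw [TensorProduct.tensorQuotEquivQuotSMul_tmul_mk, one_smul]
  (Submodule.quotEquivOfEq _ _ hker).trans (f.quotKerEquivOfSurjective hf)

lemma finite_tensorProduct_left [Module.Finite S N] [Module.Finite R M] :
    Module.Finite S (N ⊗[R] M) :=
  Module.Finite.equiv (AlgebraTensorModule.cancelBaseChange R S S N M)

variable {N} in
lemma support_tensorProduct_le [IsLocalRing R] [Module.Finite S N] [Module.Finite R M]
    (hM : maximalIdeal R ∈ (Module.annihilator R M).minimalPrimes) :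
    Module.support S (N ⊗[R] M) ⊆ Module.support S (N ⊗[R] (R ⧸ maximalIdeal R)) := by
  have := finite_tensorProduct_left (R := R) (S := S) N M
  intro q hq
  rw [← (quotientMapSMulTopEquivTensor N (maximalIdeal R)).support_eq, Module.support_quotient]
  rw [Module.mem_support_iff_of_finite] at hq
  have hN : Module.annihilator S N ≤ q.asIdeal := by
    refine le_trans (fun s hs ↦ ?_) hq
    rw [Module.mem_annihilator] at hs ⊢
    intro z
    induction z with
    | zero => simp
    | add a b ha hb => simp [ha, hb]
    | tmul n m => simp [TensorProduct.smul_tmul', hs]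
  have hM' : Module.annihilator R M ≤ q.asIdeal.comap (algebraMap R S) := by
    intro r hr
    refine hq ?_
    rw [Module.mem_annihilator] at hr ⊢
    intro z
    induction z with
    | zero => simp
    | add a b ha hb => simp [ha, hb]
    | tmul n m => rw [algebraMap_smul, TensorProduct.smul_tmul', TensorProduct.smul_tmul, hr,
        TensorProduct.tmul_zero]
  refine ⟨Module.mem_support_iff_of_finite.mpr hN, ?_⟩
  exact Ideal.map_le_iff_le_comap.mpr
    (hM.2 ⟨inferInstance, hM'⟩ (le_maximalIdeal (Ideal.IsPrime.ne_top inferInstance)))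

end TensorQuotient

section Flat

variable {R S : Type*} [CommRing R] [CommRing S] [Algebra R S]
  {N : Type*} [AddCommGroup N] [Module R N] [Module S N] [IsScalarTower R S N]

lemma IsLocalRing.isFiniteLength_quotient_pow_smul_top [IsLocalRing R] [IsNoetherianRing R]
    (M : Type*) [AddCommGroup M] [Module R M] [Module.Finite R M] (k : ℕ) :
    IsFiniteLength R (M ⧸ (maximalIdeal R ^ k • (⊤ : Submodule R M))) := by
  rw [isFiniteLength_iff_isNoetherian_isArtinian]
  refine ⟨inferInstance, ?_⟩
  rcases Nat.eq_zero_or_pos k with rfl | hk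
  · have : Subsingleton (M ⧸ (maximalIdeal R ^ 0 • (⊤ : Submodule R M))) := by
      rw [Submodule.Quotient.subsingleton_iff]
      simp
    infer_instance
  have : IsArtinianRing (R ⧸ maximalIdeal R ^ k) := by
    apply IsLocalRing.quotient_artinian_of_mem_minimalPrimes_of_isLocalRing
    rw [← Ideal.radical_minimalPrimes, Ideal.radical_pow _ hk.ne', Ideal.radical_minimalPrimes,
      Ideal.minimalPrimes_eq_subsingleton_self]
    rfl
  have : IsArtinian (R ⧸ maximalIdeal R ^ k)
      (M ⧸ (maximalIdeal R ^ k • (⊤ : Submodule R M))) :=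
    have : Module.Finite (R ⧸ maximalIdeal R ^ k)
      (M ⧸ (maximalIdeal R ^ k • (⊤ : Submodule R M))) := .of_restrictScalars_finite R _ _
    inferInstance
  exact isArtinian_of_surjective_algebraMap (R := R ⧸ maximalIdeal R ^ k)
    Ideal.Quotient.mk_surjective

lemma IsFiniteLength.isSMulRegular_tensorProduct [IsLocalRing R] [Module.Flat R N] {y : S}
    (hy : IsSMulRegular (N ⊗[R] (R ⧸ maximalIdeal R)) y)
    {L : Type*} [AddCommGroup L] [Module R L] (hL : IsFiniteLength R L) :
    IsSMulRegular (N ⊗[R] L) y := by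
  induction hL with
  | of_subsingleton => exact fun a b _ ↦ Subsingleton.elim a b
  | @of_simple_quotient L _ _ L' _ _ ih =>
    have hq : IsSMulRegular (N ⊗[R] (L ⧸ L')) y := by
      obtain ⟨I, hI, ⟨e⟩⟩ := isSimpleModule_iff_quot_maximal.mp ‹IsSimpleModule R (L ⧸ L')›
      obtain rfl := IsLocalRing.eq_maximalIdeal hI
      exact ((AlgebraTensorModule.congr (LinearEquiv.refl S N) e).isSMulRegular_congr y).mpr hy
    refine isSMulRegular_of_range_eq_ker (f := AlgebraTensorModule.lTensor S N L'.subtype)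
      (g := AlgebraTensorModule.lTensor S N L'.mkQ)
      (Module.Flat.lTensor_preserves_injective_linearMap _ L'.injective_subtype) ?_ ih hq
    ext z
    exact (lTensor_exact N (LinearMap.exact_subtype_mkQ L') L'.mkQ_surjective z).symm

variable [IsLocalRing R] [IsNoetherianRing R] [IsLocalRing S] [IsNoetherianRing S]
  [IsLocalHom (algebraMap R S)] [Module.Finite S N] [Module.Flat R N]

lemma isSMulRegular_tensorProduct_of_residue {y : S}
    (hy : IsSMulRegular (N ⊗[R] (R ⧸ maximalIdeal R)) y)
    (M : Type*) [AddCommGroup M] [Module R M] [Module.Finite R M] :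
    IsSMulRegular (N ⊗[R] M) y := by
  have := finite_tensorProduct_left (R := R) (S := S) N M
  refine IsSMulRegular.of_right_eq_zero_of_smul fun z hz ↦ ?_
  have hI : (maximalIdeal R).map (algebraMap R S) ≠ ⊤ := fun h ↦ by
    have hle : (maximalIdeal R).map (algebraMap R S) ≤ maximalIdeal S :=
      Ideal.map_le_iff_le_comap.mpr fun r hr ↦ map_nonunit (algebraMap R S) r hr
    rw [h, top_le_iff] at hle
    exact Ideal.IsPrime.ne_top' hle
  rw [← Submodule.mem_bot S, ← Ideal.iInf_pow_smul_eq_bot_of_isLocalRing _ hI,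
    Submodule.mem_iInf]
  intro k
  let L := maximalIdeal R ^ k • (⊤ : Submodule R M)
  have hzero : AlgebraTensorModule.lTensor S N L.mkQ z = 0 := by
    refine ((isFiniteLength_quotient_pow_smul_top M k).isSMulRegular_tensorProduct
      hy).right_eq_zero_of_smul ?_
    rw [← map_smul, hz, map_zero]
  obtain ⟨w, rfl⟩ := (lTensor_exact N (LinearMap.exact_subtype_mkQ L) L.mkQ_surjective z).mp hzero
  clear hz hzero
  induction w with
  | zero => simp
  | add a b ha hb => rw [map_add]; exact add_mem ha hb
  | tmul n l =>
    obtain ⟨l, hl⟩ := l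
    rw [LinearMap.lTensor_tmul, Submodule.subtype_apply]
    induction hl using Submodule.smul_induction_on' with
    | smul r hr m _ =>
      rw [← TensorProduct.smul_tmul, ← algebraMap_smul S r n, ← TensorProduct.smul_tmul',
        ← Ideal.map_pow]
      exact Submodule.smul_mem_smul (Ideal.mem_map_of_mem _ hr) trivial
    | add a _ b _ ha hb => rw [TensorProduct.tmul_add]; exact add_mem ha hb

lemma flat_quotSMulTop_of_residue {y : S}
    (hy : IsSMulRegular (N ⊗[R] (R ⧸ maximalIdeal R)) y) :
    Module.Flat R (QuotSMulTop y N) := by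
  rw [Module.Flat.iff_lTensor_injective']
  intro I
  have hinj : Function.Injective
      (QuotSMulTop.map y (AlgebraTensorModule.lTensor S N I.subtype)) := by
    have h := QuotSMulTop.map_first_exact_on_four_term_exact_of_isSMulRegular_last
      (f₁ := (0 : N ⊗[R] I →ₗ[S] N ⊗[R] I))
      (f₂ := AlgebraTensorModule.lTensor S N I.subtype)
      (f₃ := AlgebraTensorModule.lTensor S N I.mkQ) (r := y) ?_
      (lTensor_exact N (LinearMap.exact_subtype_mkQ I) I.mkQ_surjective)
      (isSMulRegular_tensorProduct_of_residue hy _)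
    · rw [injective_iff_map_eq_zero]
      intro a ha
      obtain ⟨b, rfl⟩ := (h a).mp ha
      obtain ⟨b, rfl⟩ := Submodule.Quotient.mk_surjective _ b
      simp
    · intro a
      have := Module.Flat.lTensor_preserves_injective_linearMap (M := N) _ I.injective_subtype
      simpa [eq_comm (a := (0 : N ⊗[R] I))] using map_eq_zero_iff _ this
  have hcomm (a : QuotSMulTop y (N ⊗[R] I)) :
      I.subtype.lTensor (QuotSMulTop y N) (quotSMulTopTensorEquiv N I y a) =
      quotSMulTopTensorEquiv N R y
        (QuotSMulTop.map y (AlgebraTensorModule.lTensor S N I.subtype) a) := by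
    obtain ⟨a, rfl⟩ := Submodule.Quotient.mk_surjective _ a
    rw [QuotSMulTop.map_apply_mk, quotSMulTopTensorEquiv_mk, quotSMulTopTensorEquiv_mk]
    induction a with
    | zero => simp
    | add a b ha hb => simp only [map_add, ha, hb]
    | tmul n i => rfl
  rw [injective_iff_map_eq_zero]
  intro a ha
  obtain ⟨a, rfl⟩ := (quotSMulTopTensorEquiv N I y).surjective a
  rw [hcomm, LinearEquiv.map_eq_zero_iff] at ha
  rw [(injective_iff_map_eq_zero _).mp hinj a ha, map_zero]

end Flat

section LocalHom

variable {R S : Type*} [CommRing R] [CommRing S] [Algebra R S]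
  [IsLocalRing R] [IsNoetherianRing R] [IsLocalRing S] [IsNoetherianRing S]
  [IsLocalHom (algebraMap R S)]
  {N : Type*} [AddCommGroup N] [Module R N] [Module S N] [IsScalarTower R S N]
  [Module.Finite S N]

lemma isWeaklyRegular_tensorProduct_of_residue [Module.Flat R N] {ys : List S}
    (hys : IsWeaklyRegular (N ⊗[R] (R ⧸ maximalIdeal R)) ys)
    (M : Type*) [AddCommGroup M] [Module R M] [Module.Finite R M] :
    IsWeaklyRegular (N ⊗[R] M) ys := by
  induction ys generalizing N with
  | nil => simp
  | cons y ys ih =>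
    rw [isWeaklyRegular_cons_iff] at hys ⊢
    have := flat_quotSMulTop_of_residue hys.1
    rw [(quotSMulTopTensorEquiv _ _ y).isWeaklyRegular_congr] at hys ⊢
    exact ⟨isSMulRegular_tensorProduct_of_residue hys.1 M, ih hys.2⟩

lemma isWeaklyRegular_tensorProduct_append [Module.Flat R N] {ys : List S}
    (hys : IsWeaklyRegular (N ⊗[R] (R ⧸ maximalIdeal R)) ys) {xs : List R}
    {M : Type*} [AddCommGroup M] [Module R M] [Module.Finite R M] (hxs : IsWeaklyRegular M xs) :
    IsWeaklyRegular (N ⊗[R] M) (xs.map (algebraMap R S) ++ ys) := by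
  induction xs generalizing M with
  | nil => exact isWeaklyRegular_tensorProduct_of_residue hys M
  | cons x xs ih =>
    rw [isWeaklyRegular_cons_iff] at hxs
    rw [List.map_cons, List.cons_append, isWeaklyRegular_cons_iff,
      (quotSMulTopAlgebraMapTensorEquiv N M x).isWeaklyRegular_congr]
    refine ⟨?_, ih hxs.2⟩
    have h : IsSMulRegular (N ⊗[R] M) x := hxs.1.lTensor N
    exact (isSMulRegular_algebraMap_iff S).mpr h

lemma supportDim_tensorProduct_le (M : Type*) [AddCommGroup M] [Module R M] [Module.Finite R M] :
    Module.supportDim S (N ⊗[R] M) ≤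
      Module.supportDim R M + Module.supportDim S (N ⊗[R] (R ⧸ maximalIdeal R)) := by
  obtain ⟨d, hd⟩ : ∃ d : ℕ, Module.supportDim R M < d := by
    have h := (Module.supportDim_le_ringKrullDim R M).trans_lt (ringKrullDim_lt_top (R := R))
    generalize Module.supportDim R M = D at h ⊢
    induction D using WithBot.recBotCoe with
    | bot => exact ⟨0, WithBot.bot_lt_coe _⟩
    | coe a =>
      lift a to ℕ using by rintro rfl; exact h.ne rfl
      exact ⟨a + 1, by exact_mod_cast Nat.lt_succ_self a⟩
  induction d generalizing M with
  | zero =>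
    have : Subsingleton M := by
      rw [← Module.supportDim_eq_bot_iff_subsingleton R]
      exact (WithBot.lt_coe_bot).mp hd
    rw [Module.supportDim_eq_bot_of_subsingleton]
    exact bot_le
  | succ d ih =>
    rcases subsingleton_or_nontrivial M with hM | hM
    · rw [Module.supportDim_eq_bot_of_subsingleton]
      exact bot_le
    by_cases hmin : maximalIdeal R ∈ (Module.annihilator R M).minimalPrimes
    · have h0 : 0 ≤ Module.supportDim R M := by
        have := Module.nonempty_support_of_nontrivial (R := R) (M := M)
        have := this.to_subtype
        exact Order.krullDim_nonneg
      calc _ ≤ Module.supportDim S (N ⊗[R] (R ⧸ maximalIdeal R)) :=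
            Order.krullDim_le_of_strictMono (Set.inclusion (support_tensorProduct_le M hmin))
              fun _ _ h ↦ h
        _ ≤ _ := le_add_of_nonneg_left h0
    · obtain ⟨x, hx, hxp⟩ : ∃ x ∈ maximalIdeal R,
          ∀ p ∈ (Module.annihilator R M).minimalPrimes, x ∉ p := by
        by_contra! hcon
        have hsub : (maximalIdeal R : Set R) ⊆
            ⋃ p ∈ (Module.annihilator R M).minimalPrimes, (p : Set R) := fun x hx ↦ by
          simpa using hcon x hx
        obtain ⟨p, hp, hle⟩ := (Ideal.subset_union_prime_finite
          ((Module.annihilator R M).finite_minimalPrimes_of_isNoetherianRing R) (f := id) 0 0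
          fun _ h _ _ ↦ h.isPrime).mp hsub
        have hpm : p = maximalIdeal R :=
          le_antisymm (le_maximalIdeal hp.isPrime.ne_top) hle
        exact hmin (hpm ▸ hp)
      have hxS : algebraMap R S x ∈ maximalIdeal S := map_nonunit (algebraMap R S) x hx
      have := finite_tensorProduct_left (R := R) (S := S) N M
      have h1 := Module.supportDim_le_supportDim_quotSMulTop_succ (M := N ⊗[R] M) hxS
      have h2 := Module.supportDim_quotSMulTop_succ_le_of_notMem_minimalPrimes hxp
      rw [Module.supportDim_eq_of_equiv (quotSMulTopAlgebraMapTensorEquiv N M x)] at h1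
      have h3 := ih (QuotSMulTop x M) <| by
        have := h2.trans_lt hd
        generalize Module.supportDim R (QuotSMulTop x M) = D at this ⊢
        induction D using WithBot.recBotCoe with
        | bot => exact WithBot.bot_lt_coe _
        | coe a =>
          lift a to ℕ using by rintro rfl; exact not_top_lt this
          norm_cast at this ⊢
          omega
      calc _ ≤ _ := h1
        _ ≤ _ := add_le_add_left h3 1
        _ = _ := add_right_comm _ _ _
        _ ≤ _ := add_le_add_left h2 _

end LocalHom

section Transport

lemma localDepth_le_of_surjective {R S X Y : Type*} [CommRing R] [CommRing S] [IsLocalRing R]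
    [IsLocalRing S] [AddCommGroup X] [Module R X] [AddCommGroup Y] [Module S Y]
    (φ : R →+* S) (hφ : Function.Surjective φ) (e : X ≃+ Y)
    (he : ∀ (r : R) (x : X), e (r • x) = φ r • e x) :
    localDepth S Y ≤ localDepth R X := by
  refine sSup_le ?_
  rintro _ ⟨ss, rfl, hmem, hreg⟩
  refine le_sSup ⟨ss.map (Function.surjInv hφ), by simp, ?_, ?_⟩
  · intro r hr
    obtain ⟨s, hs, rfl⟩ := List.mem_map.mp hr
    refine fun hu ↦ hmem s hs ?_
    rw [← Function.surjInv_eq hφ s]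
    exact hu.map φ
  · refine (AddEquiv.isRegular_congr (e := e) ?_).mpr hreg
    rw [List.forall₂_map_left_iff, List.forall₂_same]
    intro s _ x
    rw [he, Function.surjInv_eq hφ]

lemma supportDim_le_of_surjective {R S X Y : Type*} [CommRing R] [CommRing S]
    [AddCommGroup X] [Module R X] [AddCommGroup Y] [Module S Y]
    (φ : R →+* S) (hφ : Function.Surjective φ) (e : X ≃+ Y)
    (he : ∀ (r : R) (x : X), e (r • x) = φ r • e x) :
    Module.supportDim R X ≤ Module.supportDim S Y := by
  have key (p : Module.support R X) : ∃ q : Module.support S Y,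
      q.1.asIdeal.comap φ = p.1.asIdeal := by
    obtain ⟨p, hp⟩ := p
    obtain ⟨x, hx⟩ := Module.mem_support_iff_exists_annihilator.mp hp
    have hker : RingHom.ker φ ≤ p.asIdeal := by
      refine le_trans (fun r hr ↦ ?_) hx
      rw [Submodule.mem_annihilator_span_singleton, ← e.map_eq_zero_iff, he,
        (RingHom.mem_ker).mp hr, zero_smul]
    have hprime : (p.asIdeal.map φ).IsPrime := Ideal.map_isPrime_of_surjective hφ hker
    have hcomap : (p.asIdeal.map φ).comap φ = p.asIdeal := by
      rw [Ideal.comap_map_of_surjective' φ hφ, sup_eq_left.mpr hker]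
    refine ⟨⟨⟨p.asIdeal.map φ, hprime⟩, ?_⟩, hcomap⟩
    refine Module.mem_support_iff_exists_annihilator.mpr ⟨e x, fun s hs ↦ ?_⟩
    obtain ⟨r, rfl⟩ := hφ s
    rw [Submodule.mem_annihilator_span_singleton, ← he, e.map_eq_zero_iff,
      ← Submodule.mem_annihilator_span_singleton] at hs
    exact Ideal.mem_map_of_mem _ (hx hs)
  choose f hf using key
  refine Order.krullDim_le_of_strictMono f fun p q hpq ↦ ?_
  have hle : p.1.asIdeal < q.1.asIdeal := hpq
  change (f p).1.asIdeal < (f q).1.asIdeal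
  rw [← hf p, ← hf q] at hle
  refine lt_of_le_not_ge ((Ideal.comap_le_comap_iff_of_surjective φ hφ _ _).mp hle.le) fun h ↦ ?_
  exact hle.not_ge (Ideal.comap_mono h)

end Transport

section LocalHom

variable {R S : Type*} [CommRing R] [CommRing S] [Algebra R S]
  [IsLocalRing R] [IsNoetherianRing R] [IsLocalRing S] [IsNoetherianRing S]
  [IsLocalHom (algebraMap R S)]
  (N : Type*) [AddCommGroup N] [Module R N] [Module S N] [IsScalarTower R S N]
  [Module.Finite S N]

lemma nontrivial_tensorProduct_residue {R : Type*} (S : Type*) [CommRing R] [CommRing S]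
    [Algebra R S] [IsLocalRing R] [IsLocalRing S] [IsLocalHom (algebraMap R S)]
    (N : Type*) [AddCommGroup N] [Module R N] [Module S N] [IsScalarTower R S N]
    [Module.Finite S N] [Nontrivial N] :
    Nontrivial (N ⊗[R] (R ⧸ maximalIdeal R)) := by
  rw [← (quotientMapSMulTopEquivTensor (S := S) N (maximalIdeal R)).toEquiv.nontrivial_congr,
    Submodule.Quotient.nontrivial_iff]
  refine (Submodule.top_ne_ideal_smul_of_le_jacobson_annihilator
    (le_trans ?_ (maximalIdeal_le_jacobson _))).symm
  exact Ideal.map_le_iff_le_comap.mpr fun r hr ↦ map_nonunit (algebraMap R S) r hr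

lemma localDepth_add_le_localDepth_tensorProduct [Module.Flat R N]
    (M : Type*) [AddCommGroup M] [Module R M] [Module.Finite R M] [Nontrivial (N ⊗[R] M)] :
    localDepth R M + localDepth S (N ⊗[R] (R ⧸ maximalIdeal R)) ≤ localDepth S (N ⊗[R] M) := by
  have := finite_tensorProduct_left (R := R) (S := S) N M
  have hM : Nontrivial M := by
    by_contra h
    rw [not_nontrivial_iff_subsingleton] at h
    exact not_subsingleton (N ⊗[R] M) inferInstance
  have hN : Nontrivial N := by
    by_contra h
    rw [not_nontrivial_iff_subsingleton] at h
    exact not_subsingleton (N ⊗[R] M) inferInstance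
  have := nontrivial_tensorProduct_residue (R := R) S N
  unfold localDepth idealDepth
  rw [ENat.sSup_add (by exact ⟨0, [], by simp, by simp, .nil R M⟩)]
  refine iSup₂_le fun a ⟨xs, hxs, hxm, hxr⟩ ↦ ?_
  rw [ENat.add_sSup (by exact ⟨0, [], by simp, by simp, .nil S _⟩)]
  refine iSup₂_le fun b ⟨ys, hys, hym, hyr⟩ ↦ ?_
  have hmem : ∀ r ∈ xs.map (algebraMap R S) ++ ys, r ∈ maximalIdeal S := by
    intro r hr
    rcases List.mem_append.mp hr with hr | hr
    · obtain ⟨x, hx, rfl⟩ := List.mem_map.mp hr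
      exact map_nonunit (algebraMap R S) x (hxm x hx)
    · exact hym r hr
  refine le_sSup ⟨xs.map (algebraMap R S) ++ ys, by simp [← hxs, ← hys], hmem, ?_⟩
  exact .of_isWeaklyRegular_of_mem_maximalIdeal (N ⊗[R] M) hmem
    (isWeaklyRegular_tensorProduct_append hyr.1 hxr.1)

end LocalHom

lemma min_le_add_one_of_le_add {n a b d : WithBot ℕ∞} {x y z : ℕ∞} (hd : d ≤ a + b)
    (hz : x + y ≤ z) (ha : min n a ≤ x) (hb : min n b ≤ (y : WithBot ℕ∞) + 1) :
    min n d ≤ (z : WithBot ℕ∞) + 1 := by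
  have hxz : (x : WithBot ℕ∞) ≤ z := WithBot.coe_le_coe.mpr (le_self_add.trans hz)
  have hyz : (y : WithBot ℕ∞) ≤ z := WithBot.coe_le_coe.mpr (le_add_self.trans hz)
  have hz' : (x : WithBot ℕ∞) + y ≤ z := by exact_mod_cast hz
  have h1 : (z : WithBot ℕ∞) ≤ z + 1 := le_add_of_nonneg_right zero_le_one
  rcases min_le_iff.mp ha with h | h
  · exact (min_le_left _ _).trans (h.trans (hxz.trans h1))
  rcases min_le_iff.mp hb with h' | h'
  · exact (min_le_left _ _).trans (h'.trans (by gcongr))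
  calc min n d ≤ d := min_le_right _ _
    _ ≤ a + b := hd
    _ ≤ x + (y + 1) := add_le_add h h'
    _ = x + y + 1 := (add_assoc _ _ _).symm
    _ ≤ z + 1 := by gcongr

section Localization

/-- The commutativity of the tensor product is linear for the action on the right factor. -/
def tensorRightModuleComm (R S : Type u) [CommRing R] [CommRing S] [Algebra R S]
    (M : Type u) [AddCommGroup M] [Module R M]
    (N : Type u) [AddCommGroup N] [Module R N] [Module S N] [IsScalarTower R S N] :
    M ⊗[R] N ≃ₗ[S] N ⊗[R] M :=
  { TensorProduct.comm R M N with
    map_smul' := fun s x ↦ (TensorProduct.comm R M N).apply_symm_apply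
      (s • TensorProduct.comm R M N x) }

lemma flat_of_isLocalizedModule_of_isScalarTower {R S N N' : Type*} [CommRing R] [CommRing S]
    [Algebra R S] [AddCommGroup N] [Module R N] [Module S N] [IsScalarTower R S N]
    [AddCommGroup N'] [Module R N'] [Module S N'] [IsScalarTower R S N'] (T : Submonoid S)
    (g : N →ₗ[S] N') [IsLocalizedModule T g] [Module.Flat R N] : Module.Flat R N' := by
  rw [Module.Flat.iff_lTensor_injective']
  intro I
  rw [← AlgebraTensorModule.coe_lTensor (A := S), ← IsLocalizedModule.map_lTensor (S := T) (g := g)]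
  exact IsLocalizedModule.map_injective T _ _ _
    (Module.Flat.lTensor_preserves_injective_linearMap _ I.injective_subtype)

variable {R S : Type u} [CommRing R] [CommRing S] [Algebra R S]
  (M : Type u) [AddCommGroup M] [Module R M]
  (N : Type u) [AddCommGroup N] [Module R N] [Module S N] [IsScalarTower R S N]
  {R' S' M' N' : Type*} [CommRing R'] [CommRing S'] [Algebra R R'] [Algebra S S']
  [Algebra R' S'] [Algebra R S'] [IsScalarTower R R' S']
  [AddCommGroup M'] [Module R M'] [Module R' M'] [IsScalarTower R R' M']
  [AddCommGroup N'] [Module R N'] [Module S N'] [Module R' N'] [Module S' N']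
  [IsScalarTower R S N'] [IsScalarTower R R' N'] [IsScalarTower S S' N'] [IsScalarTower R' S' N']
  [IsScalarTower R S' N']
  (U : Submonoid R) (T : Submonoid S) [IsLocalization U R'] [IsLocalization T S']
  (f : M →ₗ[R] M') [IsLocalizedModule U f] (g : N →ₗ[S] N') [IsLocalizedModule T g]

variable {M N} in
/-- Localizing `M ⊗ N` upstairs amounts to tensoring the localizations of `M` and `N`. -/
def localizedTensorEquiv {X : Type*} [AddCommGroup X] [Module S X] [Module S' X]
    [IsScalarTower S S' X] (h : M ⊗[R] N →ₗ[S] X) [IsLocalizedModule T h] :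
    X ≃ₗ[S'] N' ⊗[R'] M' :=
  ((IsLocalizedModule.linearEquiv T h (AlgebraTensorModule.rTensor R M g ∘ₗ
      (tensorRightModuleComm R S M N).toLinearMap)).extendScalarsOfIsLocalization T S').trans <|
    (AlgebraTensorModule.cancelBaseChange R R' S' N' M).symm.trans <|
      AlgebraTensorModule.congr (.refl S' N') (IsLocalizedModule.isBaseChange U R' f).equiv

end Localization

section Fiber

lemma exists_isLocalizedModule_quotient {S S' N N' : Type*} [CommRing S] [CommRing S']
    [Algebra S S'] [AddCommGroup N] [Module S N] [AddCommGroup N'] [Module S N'] [Module S' N']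
    [IsScalarTower S S' N'] (T : Submonoid S) [IsLocalization T S'] (g : N →ₗ[S] N')
    [IsLocalizedModule T g] (I : Ideal S) :
    ∃ h : (N ⧸ (I • (⊤ : Submodule S N))) →ₗ[S]
      (N' ⧸ (I.map (algebraMap S S') • (⊤ : Submodule S' N'))), IsLocalizedModule T h := by
  have heq : (I • (⊤ : Submodule S N)).localized' S' T g =
      I.map (algebraMap S S') • (⊤ : Submodule S' N') := by
    rw [Submodule.localized'_smul, Submodule.localized'_top, Submodule.localized'_eq_span]
    rfl
  exact ⟨((Submodule.quotEquivOfEq _ _ heq).restrictScalars S).toLinearMap ∘ₗ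
    Submodule.toLocalizedQuotient' S' T g _, inferInstance⟩

section

variable {S F : Type*} [CommRing S] [CommRing F] [Algebra S F]
  {Q : Ideal S} [Q.IsPrime] {Q' : Ideal F} [Q'.IsPrime] {T : Submonoid S}

lemma exists_smul_eq_algebraMap_of_notMem (hQ : Q'.comap (algebraMap S F) = Q)
    (hT : T ≤ Q.primeCompl) (hF : ∀ f : F, ∃ t ∈ T, ∃ b : S, t • f = algebraMap S F b)
    {f : F} (hf : f ∉ Q') : ∃ t ∈ T, ∃ b ∉ Q, t • f = algebraMap S F b := by
  obtain ⟨t, ht, b, hb⟩ := hF f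
  refine ⟨t, ht, b, fun h ↦ ?_, hb⟩
  rw [← hQ, Ideal.mem_comap, ← hb, Algebra.smul_def] at h
  rcases Ideal.IsPrime.mem_or_mem inferInstance h with h | h
  · exact hT ht (hQ.le h)
  · exact hf h

variable {F' D E E' : Type*} [CommRing F'] [Algebra F F'] [IsLocalization.AtPrime F' Q']
  [Algebra S F'] [IsScalarTower S F F']
  [AddCommGroup D] [Module S D] [AddCommGroup E] [Module S E] [Module F E] [IsScalarTower S F E]
  [AddCommGroup E'] [Module S E'] [Module F E'] [IsScalarTower S F E']

lemma isLocalizedModule_comp_of_comap_eq (hQ : Q'.comap (algebraMap S F) = Q)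
    (hT : T ≤ Q.primeCompl) (hF : ∀ f : F, ∃ t ∈ T, ∃ b : S, t • f = algebraMap S F b)
    (i : D →ₗ[S] E) [IsLocalizedModule T i] (j : E →ₗ[F] E') [IsLocalizedModule Q'.primeCompl j] :
    IsLocalizedModule Q.primeCompl (j.restrictScalars S ∘ₗ i) where
  map_units b := by
    have hb : algebraMap S F b ∈ Q'.primeCompl := fun h ↦ b.2 (hQ.le h)
    have := (Module.End.isUnit_iff _).mp (IsLocalizedModule.map_units j ⟨_, hb⟩)
    rw [Module.End.isUnit_iff]
    convert! this using 1
    ext x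
    simp
  surj y := by
    obtain ⟨⟨m, s⟩, hs⟩ := IsLocalizedModule.surj Q'.primeCompl j y
    obtain ⟨⟨d, t⟩, ht⟩ := IsLocalizedModule.surj T i m
    obtain ⟨t', ht', b, hb, hbs⟩ := exists_smul_eq_algebraMap_of_notMem hQ hT hF s.2
    refine ⟨⟨t' • d, ⟨t * b, mul_mem (hT t.2) hb⟩⟩, ?_⟩
    simp only [Submonoid.smul_def] at hs ht ⊢
    change (t.1 * b) • y = j (i (t' • d))
    rw [map_smul, ← ht, mul_smul, ← algebraMap_smul F b, ← hbs, smul_assoc, hs,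
      ← algebraMap_smul F t', ← algebraMap_smul F t.1, ← algebraMap_smul F t',
      ← algebraMap_smul F t.1 m, map_smul, map_smul, smul_comm]
  exists_of_eq {x y} hxy := by
    obtain ⟨s, hs⟩ := IsLocalizedModule.exists_of_eq (S := Q'.primeCompl) (f := j) hxy
    obtain ⟨t, ht, b, hb, hbs⟩ := exists_smul_eq_algebraMap_of_notMem hQ hT hF s.2
    have hbi : i (b • x) = i (b • y) := by
      simp only [Submonoid.smul_def] at hs
      rw [map_smul, map_smul, ← algebraMap_smul F b, ← algebraMap_smul F b, ← hbs, smul_assoc,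
        smul_assoc, hs]
    obtain ⟨c, hc⟩ := IsLocalizedModule.exists_of_eq (S := T) (f := i) hbi
    refine ⟨⟨c * b, mul_mem (hT c.2) hb⟩, ?_⟩
    simpa [Submonoid.smul_def, mul_smul] using hc

variable (F') in
lemma exists_surjective_ringHom_of_comap_eq (S' : Type*) [CommRing S'] [Algebra S S']
    [IsLocalization.AtPrime S' Q] (hQ : Q'.comap (algebraMap S F) = Q)
    (hT : T ≤ Q.primeCompl) (hF : ∀ f : F, ∃ t ∈ T, ∃ b : S, t • f = algebraMap S F b) :
    ∃ φ : S' →+* F', Function.Surjective φ ∧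
      ∀ s, φ (algebraMap S S' s) = algebraMap S F' s := by
  have hunit (b : Q.primeCompl) : IsUnit (algebraMap S F' b) := by
    rw [IsScalarTower.algebraMap_apply S F F']
    exact IsLocalization.map_units F' (M := Q'.primeCompl) ⟨_, fun h ↦ b.2 (hQ.le h)⟩
  refine ⟨IsLocalization.lift hunit, fun y ↦ ?_, fun s ↦ IsLocalization.lift_eq hunit s⟩
  obtain ⟨f, s, rfl⟩ := IsLocalization.exists_mk'_eq Q'.primeCompl y
  obtain ⟨t, ht, b, hb⟩ := hF f
  obtain ⟨t', ht', b', hb', hbs⟩ := exists_smul_eq_algebraMap_of_notMem hQ hT hF s.2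
  refine ⟨IsLocalization.mk' S' (b * t') ⟨t * b', mul_mem (hT ht) hb'⟩, ?_⟩
  rw [IsLocalization.lift_mk'_spec]
  simp only [IsScalarTower.algebraMap_apply S F F', map_mul, ← hb, ← hbs, Algebra.smul_def]
  have := IsLocalization.mk'_spec F' f s
  linear_combination
    (algebraMap F F' (algebraMap S F t) * algebraMap F F' (algebraMap S F t')) * -this

variable {S' X : Type*} [CommRing S'] [Algebra S S'] [IsLocalization.AtPrime S' Q]
  [IsLocalRing S'] [IsLocalRing F'] [Module F' E'] [IsScalarTower F F' E']
  [AddCommGroup X] [Module S X] [Module S' X] [IsScalarTower S S' X]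

lemma localDepth_le_and_supportDim_le_of_comap_eq (hQ : Q'.comap (algebraMap S F) = Q)
    (hT : T ≤ Q.primeCompl) (hF : ∀ f : F, ∃ t ∈ T, ∃ b : S, t • f = algebraMap S F b)
    (i : D →ₗ[S] E) [IsLocalizedModule T i] (j : E →ₗ[F] E') [IsLocalizedModule Q'.primeCompl j]
    (k : D →ₗ[S] X) [IsLocalizedModule Q.primeCompl k] :
    localDepth F' E' ≤ localDepth S' X ∧ Module.supportDim S' X ≤ Module.supportDim F' E' := by
  obtain ⟨φ, hφ, hφS⟩ := exists_surjective_ringHom_of_comap_eq F' S' hQ hT hF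
  let : Module S' E' := Module.compHom E' φ
  have : IsScalarTower S S' E' := .of_algebraMap_smul fun s x ↦ by
    change φ (algebraMap S S' s) • x = s • x
    rw [hφS, IsScalarTower.algebraMap_apply S F F', algebraMap_smul, algebraMap_smul]
  have := isLocalizedModule_comp_of_comap_eq hQ hT hF i j
  let e : X ≃ₗ[S'] E' := (IsLocalizedModule.linearEquiv Q.primeCompl k
    (j.restrictScalars S ∘ₗ i)).extendScalarsOfIsLocalization Q.primeCompl S'
  have he (r : S') (x : X) : e.toAddEquiv (r • x) = φ r • e.toAddEquiv x := e.map_smul r x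
  exact ⟨localDepth_le_of_surjective φ hφ e.toAddEquiv he,
    supportDim_le_of_surjective φ hφ e.toAddEquiv he⟩

end

lemma min_supportDim_quotient_le_of_condC {S N : Type*} [CommRing S] [AddCommGroup N] [Module S N]
    {n : ℕ} {T : Submonoid S} {I : Ideal S} {J : Ideal (Localization T)}
    (hJ : J = I.map (algebraMap S (Localization T)))
    (h : CondC (Localization T ⧸ J) n
      (LocalizedModule T N ⧸ (J • (⊤ : Submodule (Localization T) (LocalizedModule T N)))))
    (Q : Ideal S) [Q.IsPrime] (hIQ : I ≤ Q) (hT : T ≤ Q.primeCompl) :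
    min (n : WithBot ℕ∞) (Module.supportDim (Localization.AtPrime Q)
      (LocalizedModule Q.primeCompl N ⧸ (I.map (algebraMap S (Localization.AtPrime Q)) •
        (⊤ : Submodule (Localization.AtPrime Q) (LocalizedModule Q.primeCompl N))))) ≤
    (localDepth (Localization.AtPrime Q)
      (LocalizedModule Q.primeCompl N ⧸ (I.map (algebraMap S (Localization.AtPrime Q)) •
        (⊤ : Submodule (Localization.AtPrime Q) (LocalizedModule Q.primeCompl N)))) :
      WithBot ℕ∞) + 1 := by
  subst hJ
  set L := Localization T
  set J := I.map (algebraMap S L)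
  have hdisj : Disjoint (T : Set S) (Q : Set S) :=
    Set.disjoint_left.mpr fun t ht hq ↦ hT ht hq
  have hQL : (Q.map (algebraMap S L)).IsPrime :=
    IsLocalization.isPrime_of_isPrime_disjoint T L Q inferInstance hdisj
  have hker : RingHom.ker (Ideal.Quotient.mk J) ≤ Q.map (algebraMap S L) := by
    rw [Ideal.mk_ker]
    exact Ideal.map_mono hIQ
  let Q' := (Q.map (algebraMap S L)).map (Ideal.Quotient.mk J)
  have hQ' : Q'.IsPrime := Ideal.map_isPrime_of_surjective Ideal.Quotient.mk_surjective hker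
  have hcomap : Q'.comap (algebraMap S (L ⧸ J)) = Q := by
    rw [IsScalarTower.algebraMap_eq S L (L ⧸ J), ← Ideal.comap_comap, Ideal.Quotient.algebraMap_eq,
      Ideal.comap_map_of_surjective' _ Ideal.Quotient.mk_surjective, sup_eq_left.mpr hker]
    exact IsLocalization.under_map_of_isPrime_disjoint T L inferInstance hdisj
  have hF (f : L ⧸ J) : ∃ t ∈ T, ∃ b : S, t • f = algebraMap S (L ⧸ J) b := by
    obtain ⟨f, rfl⟩ := Ideal.Quotient.mk_surjective f
    obtain ⟨⟨b, t⟩, hbt⟩ := IsLocalization.surj T f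
    refine ⟨t, t.2, b, ?_⟩
    change Ideal.Quotient.mk J ((t : S) • f) = _
    rw [Algebra.smul_def, mul_comm, hbt]
    rfl
  obtain ⟨i, hi⟩ := exists_isLocalizedModule_quotient (S' := L) T
    (LocalizedModule.mkLinearMap T N) I
  obtain ⟨k, hk⟩ := exists_isLocalizedModule_quotient (S' := Localization.AtPrime Q) Q.primeCompl
    (LocalizedModule.mkLinearMap Q.primeCompl N) I
  let E := LocalizedModule T N ⧸ (J • (⊤ : Submodule L (LocalizedModule T N)))
  let E' := LocalizedModule Q'.primeCompl E
  have : IsScalarTower S (L ⧸ J) E := ⟨fun s f x ↦ by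
    obtain ⟨f, rfl⟩ := Ideal.Quotient.mk_surjective f
    obtain ⟨x, rfl⟩ := Submodule.Quotient.mk_surjective _ x
    exact congrArg Submodule.Quotient.mk (smul_assoc s f x)⟩
  have : IsScalarTower S (L ⧸ J) E' := inferInstance
  obtain ⟨hdepth, hdim⟩ := localDepth_le_and_supportDim_le_of_comap_eq
    (F' := Localization.AtPrime Q') (S' := Localization.AtPrime Q) hcomap hT hF i
    (LocalizedModule.mkLinearMap Q'.primeCompl E) k
  rcases subsingleton_or_nontrivial E' with hE | hE
  · have hbot : Module.supportDim (Localization.AtPrime Q') E' = ⊥ :=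
      Module.supportDim_eq_bot_of_subsingleton _ _
    exact (min_le_right _ _).trans ((hdim.trans_eq hbot).trans bot_le)
  · calc _ ≤ min (n : WithBot ℕ∞) (Module.supportDim (Localization.AtPrime Q') E') :=
          min_le_min_left _ hdim
      _ ≤ (localDepth (Localization.AtPrime Q') E' : WithBot ℕ∞) + 1 :=
          h ⟨Q', hQ'⟩ hE
      _ ≤ _ := add_le_add_left (WithBot.coe_le_coe.mpr hdepth) 1

end Fiber

theorem tensor_condC_of_serreS_base_condC_fibers (A B : Type u) [CommRing A] [CommRing B] [IsNoetherianRing A] [IsNoetherianRing B]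
    [Algebra A B] (n : ℕ)
    (M : Type u) [AddCommGroup M] [Module A M] [Module.Finite A M]
    (N : Type u) [AddCommGroup N] [Module A N] [Module B N] [IsScalarTower A B N]
    [Module.Finite B N] [Module.Flat A N]
    (hM : SerreCondS A n M)
    (hfib : ∀ P ∈ Module.support A M, CondC (fiberRing A B P) n (fiberModule A B P N)) :
    CondC B n (M ⊗[A] N) := by
  intro Q hQ
  let P : PrimeSpectrum A := PrimeSpectrum.comap (algebraMap A B) Q
  let A' := Localization.AtPrime P.asIdeal
  let B' := Localization.AtPrime Q.asIdeal
  let M' := LocalizedModule P.asIdeal.primeCompl M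
  let N' := LocalizedModule Q.asIdeal.primeCompl N
  let X := LocalizedModule Q.asIdeal.primeCompl (M ⊗[A] N)
  let : Algebra A' B' :=
    (Localization.localRingHom P.asIdeal Q.asIdeal (algebraMap A B) rfl).toAlgebra
  have : IsLocalHom (algebraMap A' B') := by
    exact Localization.isLocalHom_localRingHom P.asIdeal Q.asIdeal (algebraMap A B) rfl
  have : IsScalarTower A A' B' := .of_algebraMap_eq fun a ↦
    (Localization.localRingHom_to_map P.asIdeal Q.asIdeal (algebraMap A B) rfl a).symm
  let : Module A' N' := Module.compHom N' (algebraMap A' B')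
  have : IsScalarTower A' B' N' := .of_algebraMap_smul fun _ _ ↦ rfl
  have : IsScalarTower A A' N' := .to₁₂₄ A A' B' N'
  have : IsNoetherianRing A' := IsLocalization.isNoetherianRing P.asIdeal.primeCompl _ inferInstance
  have : IsNoetherianRing B' := IsLocalization.isNoetherianRing Q.asIdeal.primeCompl _ inferInstance
  have : Module.Flat A N' := flat_of_isLocalizedModule_of_isScalarTower Q.asIdeal.primeCompl
    (LocalizedModule.mkLinearMap Q.asIdeal.primeCompl N)
  have : Module.Flat A' N' :=
    (Module.flat_iff_of_isLocalization A' P.asIdeal.primeCompl N').mpr inferInstance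
  let e : X ≃ₗ[B'] N' ⊗[A'] M' :=
    localizedTensorEquiv P.asIdeal.primeCompl Q.asIdeal.primeCompl
      (LocalizedModule.mkLinearMap P.asIdeal.primeCompl M)
      (LocalizedModule.mkLinearMap Q.asIdeal.primeCompl N)
      (LocalizedModule.mkLinearMap Q.asIdeal.primeCompl (M ⊗[A] N))
  have hX : Nontrivial X := hQ
  have hT : Nontrivial (N' ⊗[A'] M') := e.symm.toEquiv.nontrivial
  have hP : P ∈ Module.support A M := by
    by_contra h
    rw [Module.notMem_support_iff] at h
    exact not_subsingleton (N' ⊗[A'] M') inferInstance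
  have hI : (P.asIdeal.map (algebraMap A B)).map (algebraMap B B') =
      (maximalIdeal A').map (algebraMap A' B') := by
    rw [← Localization.AtPrime.map_eq_maximalIdeal, Ideal.map_map, Ideal.map_map,
      ← IsScalarTower.algebraMap_eq, ← IsScalarTower.algebraMap_eq]
  have hfiber := min_supportDim_quotient_le_of_condC (Ideal.map_map _ _).symm (hfib P hP) Q.asIdeal
    Ideal.map_comap_le (Submonoid.map_le_iff_le_comap.mpr fun _ h ↦ h)
  rw [hI] at hfiber
  let eF := quotientMapSMulTopEquivTensor (S := B') N' (maximalIdeal A')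
  rw [Module.supportDim_eq_of_equiv eF] at hfiber
  have hdepth : localDepth B' (N' ⊗[A'] M') ≤ localDepth B' X :=
    localDepth_le_of_surjective (.id B') Function.surjective_id e.toAddEquiv e.map_smul
  have hdepthF := localDepth_le_of_surjective (.id B') Function.surjective_id eF.symm.toAddEquiv
    eF.symm.map_smul
  have hdim := (Module.supportDim_eq_of_equiv e).trans_le
    (supportDim_tensorProduct_le (R := A') (S := B') (N := N') M')
  exact min_le_add_one_of_le_add hdim
    ((localDepth_add_le_localDepth_tensorProduct (R := A') (S := B') N' M').trans hdepth)
    (hM P hP) (hfiber.trans (add_le_add_left (WithBot.coe_le_coe.mpr hdepthF) 1))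


end
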